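/- arXiv:2405.02272 — 2 statements merged into one kernel-verified Lean document; each statement's English description precedes it below -/
import Mathlib

section
/- For every integer k ≥ 0, the weak cone Morse inequality holds: b^φ_k ≤ m_k − v_{k−ℓ} + m_{k−ℓ+1} − v_{k−ℓ+1}. -/
open LinearMap Module

noncomputable section

namespace ConeMorse

variable (A : ℤ → Type) [∀ i, AddCommGroup (A i)] [∀ i, Module ℝ (A i)]

/-- Transport along an equality of indices. -/
def lcast {m k : ℤ} (h : m = k) : A m →ₗ[ℝ] A k where
  toFun x := h ▸ x
  map_add' x y := by subst h; rfl
  map_smul' c x := by subst h; rfl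

variable (d : ∀ i, A i →ₗ[ℝ] A (i + 1))

/-- Cocycles in degree `i`. -/
def cocycles (i : ℤ) : Submodule ℝ (A i) := ker (d i)

/-- Coboundaries in degree `i`: the image of `d : A^{i-1} → A^i`. -/
def cobound (i : ℤ) : Submodule ℝ (A i) :=
  range ((lcast A (show i - 1 + 1 = i by ring)).comp (d (i - 1)))

/-- Cohomology in degree `i`: cocycles modulo coboundaries. -/
abbrev Hcoh (i : ℤ) :=
  cocycles A d i ⧸ Submodule.comap (cocycles A d i).subtype (cobound A d i)

section OneComplex

variable (ℓ : ℤ) (φ : ∀ i, A i →ₗ[ℝ] A (i + ℓ))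

/-- The cone differential `∂_C (a, b) = (∂ a + φ b, (−1)^{ℓ−1} ∂ b)` on
`Cone^i(φ) = A^i ⊕ A^{i−ℓ+1}`. -/
def coneD (i : ℤ) : (A i × A (i - ℓ + 1)) →ₗ[ℝ] (A (i + 1) × A (i + 1 - ℓ + 1)) :=
  LinearMap.prod
    ((d i).comp (LinearMap.fst ℝ (A i) (A (i - ℓ + 1))) +
      (lcast A (show i - ℓ + 1 + ℓ = i + 1 by ring)).comp
        ((φ (i - ℓ + 1)).comp (LinearMap.snd ℝ (A i) (A (i - ℓ + 1)))))
    (((-1 : ℝ) ^ (ℓ - 1)) •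
      ((lcast A (show i - ℓ + 1 + 1 = i + 1 - ℓ + 1 by ring)).comp
        ((d (i - ℓ + 1)).comp (LinearMap.snd ℝ (A i) (A (i - ℓ + 1))))))

variable [∀ i, FiniteDimensional ℝ (A i)]

/-- `m_k`: the dimension of the cochain group in degree `k`. -/
def mnum (k : ℤ) : ℕ := finrank ℝ (A k)

/-- `b_k`: the dimension of the cohomology in degree `k`. -/
def bnum (k : ℤ) : ℕ := finrank ℝ (Hcoh A d k)

/-- `v_k`: the rank of `φ : A^k → A^{k+ℓ}`. -/
def vnum (k : ℤ) : ℕ := finrank ℝ (range (φ k))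

/-- `r_k`: the rank of the induced map `[φ] : H^k → H^{k+ℓ}`, computed as the dimension of
`φ(Z^k)/(φ(Z^k) ∩ B^{k+ℓ})`. -/
def rnum (k : ℤ) : ℕ :=
  finrank ℝ ((Submodule.map (φ k) (cocycles A d k)) ⧸
    Submodule.comap (Submodule.map (φ k) (cocycles A d k)).subtype (cobound A d (k + ℓ)))

/-- `b^φ_k`: the dimension of the cone cohomology in degree `k`. -/
def bphi (k : ℤ) : ℕ :=
  finrank ℝ (Hcoh (fun i => A i × A (i - ℓ + 1)) (coneD A d ℓ φ) k)

end OneComplex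

end ConeMorse

open ConeMorse

/-!
The cone differential sends `(0, b)` to a pair with first entry `φ b`, so its rank out of degree `i`
is at least the rank of `φ` on `C^{i-ℓ+1}`. Since `∂_C² = 0`, rank–nullity gives
`b^φ_k = dim Cone^k - rank ∂_C^{k-1} - rank ∂_C^k`. Bounding the two ranks from below by `v_{k-ℓ}`
and `v_{k-ℓ+1}` yields the inequality.
-/

namespace ConeMorse

section LinearAlgebra

theorem finrank_range_comp_of_injective {R M N P : Type*} [Semiring R] [AddCommMonoid M]
    [Module R M] [AddCommMonoid N] [Module R N] [AddCommMonoid P] [Module R P]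
    {g : N →ₗ[R] P} (hg : Function.Injective g) (f : M →ₗ[R] N) :
    finrank R (range (g ∘ₗ f)) = finrank R (range f) := by
  rw [range_comp]
  exact (Submodule.equivMapOfInjective g hg (range f)).finrank_eq.symm

variable {K U V W X : Type*} [DivisionRing K] [AddCommGroup U] [Module K U] [AddCommGroup V]
  [Module K V] [AddCommGroup W] [Module K W] [AddCommGroup X] [Module K X]

theorem finrank_ker_quotient_range_add [FiniteDimensional K V] {f : U →ₗ[K] V} {g : V →ₗ[K] W}
    (hgf : g ∘ₗ f = 0) :
    finrank K (ker g ⧸ (range f).comap (ker g).subtype) + finrank K (range f) +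
      finrank K (range g) = finrank K V := by
  have hle : range f ≤ ker g := range_le_ker_iff.mpr hgf
  rw [← (Submodule.comapSubtypeEquivOfLe hle).finrank_eq, Submodule.finrank_quotient_add_finrank,
    add_comm, finrank_range_add_finrank_ker]

theorem finrank_range_comp_comp_le (g : V →ₗ[K] W) (f : U →ₗ[K] V) (e : X →ₗ[K] U)
    [FiniteDimensional K (range f)] :
    finrank K (range (g ∘ₗ f ∘ₗ e)) ≤ finrank K (range f) := by
  rw [range_comp]
  have hle : range (f ∘ₗ e) ≤ range f := range_comp_le_range e f
  calc finrank K ((range (f ∘ₗ e)).map g)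
      ≤ finrank K ((range f).map g) := Submodule.finrank_mono (Submodule.map_mono hle)
    _ ≤ finrank K (range f) := Submodule.finrank_map_le g (range f)

end LinearAlgebra

section Graded

variable {A : ℤ → Type} [∀ i, AddCommGroup (A i)] [∀ i, Module ℝ (A i)]

theorem lcast_injective {m k : ℤ} (h : m = k) : Function.Injective (lcast A h) := by
  subst h
  exact Function.injective_id

theorem lcast_lcast {m k j : ℤ} (h : m = k) (h' : k = j) (x : A m) :
    lcast A h' (lcast A h x) = lcast A (h.trans h') x := by
  subst h h'
  rfl

theorem map_lcast {ℓ : ℤ} (φ : ∀ i, A i →ₗ[ℝ] A (i + ℓ)) {m k : ℤ} (h : m = k) (x : A m) :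
    φ k (lcast A h x) = lcast A (congrArg (· + ℓ) h) (φ m x) := by
  subst h
  rfl

variable {d : ∀ i, A i →ₗ[ℝ] A (i + 1)}

theorem cobound_add_one (i : ℤ) : cobound A d (i + 1) = range (d i) := by
  have range_lcast_comp : ∀ j (h : j + 1 = i + 1), range (lcast A h ∘ₗ d j) = range (d i) := by
    intro j h
    obtain rfl : j = i := add_right_cancel h
    rfl
  exact range_lcast_comp _ _

theorem finrank_Hcoh_add_one (i : ℤ) [FiniteDimensional ℝ (A (i + 1))]
    (hd : d (i + 1) ∘ₗ d i = 0) :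
    finrank ℝ (Hcoh A d (i + 1)) + finrank ℝ (range (d i)) + finrank ℝ (range (d (i + 1))) =
      finrank ℝ (A (i + 1)) := by
  unfold Hcoh
  rw [cobound_add_one]
  exact finrank_ker_quotient_range_add hd

variable {ℓ : ℤ} {φ : ∀ i, A i →ₗ[ℝ] A (i + ℓ)}

theorem coneD_apply (i : ℤ) (a : A i) (b : A (i - ℓ + 1)) :
    coneD A d ℓ φ i (a, b) =
      (d i a + lcast A (by ring) (φ (i - ℓ + 1) b),
        (-1 : ℝ) ^ (ℓ - 1) • lcast A (by ring) (d (i - ℓ + 1) b)) :=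
  rfl

theorem coneD_comp_coneD (hd : ∀ i, d (i + 1) ∘ₗ d i = 0)
    (hφ : ∀ i, d (i + ℓ) ∘ₗ φ i =
      (-1 : ℝ) ^ ℓ • lcast A (show i + 1 + ℓ = i + ℓ + 1 by ring) ∘ₗ φ (i + 1) ∘ₗ d i) (i : ℤ) :
    coneD A d ℓ φ (i + 1) ∘ₗ coneD A d ℓ φ i = 0 := by
  have d_d : ∀ j x, d (j + 1) (d j x) = 0 := fun j ↦ LinearMap.congr_fun (hd j)
  have d_φ : ∀ j x, d (j + ℓ) (φ j x) =
      (-1 : ℝ) ^ ℓ • lcast A (by ring) (φ (j + 1) (d j x)) := fun j ↦ LinearMap.congr_fun (hφ j)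
  have sign : (-1 : ℝ) ^ ℓ = -(-1 : ℝ) ^ (ℓ - 1) := by
    rw [zpow_sub_one₀ (by norm_num)]
    norm_num
  refine LinearMap.ext fun ⟨a, b⟩ ↦ ?_
  rw [comp_apply, coneD_apply, coneD_apply]
  refine Prod.ext ?_ ?_
  · simp only [map_add, map_smul, d_d, map_lcast d, map_lcast φ, d_φ, lcast_lcast, sign]
    simp
  · simp only [map_smul, map_lcast d, d_d, map_zero, smul_zero, LinearMap.zero_apply,
      Prod.snd_zero]

theorem fst_comp_coneD_comp_inr (i : ℤ) :
    LinearMap.fst ℝ _ _ ∘ₗ coneD A d ℓ φ i ∘ₗ LinearMap.inr ℝ _ _ =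
      lcast A (show i - ℓ + 1 + ℓ = i + 1 by ring) ∘ₗ φ (i - ℓ + 1) := by
  ext b
  simp [coneD_apply]

theorem vnum_le_finrank_range_coneD (i : ℤ) [FiniteDimensional ℝ (range (coneD A d ℓ φ i))] :
    vnum A ℓ φ (i - ℓ + 1) ≤ finrank ℝ (range (coneD A d ℓ φ i)) := by
  have degree_eq : i - ℓ + 1 + ℓ = i + 1 := by ring
  rw [vnum, ← finrank_range_comp_of_injective (lcast_injective degree_eq),
    ← fst_comp_coneD_comp_inr (d := d)]
  exact finrank_range_comp_comp_le _ _ _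

end Graded

end ConeMorse

theorem weak_cone_morse_inequality_general
    {C : ℤ → Type} [∀ i, AddCommGroup (C i)] [∀ i, Module ℝ (C i)]
    {d : ∀ i, C i →ₗ[ℝ] C (i + 1)} (hd : ∀ i, d (i + 1) ∘ₗ d i = 0)
    {ℓ : ℤ} {φ : ∀ i, C i →ₗ[ℝ] C (i + ℓ)}
    (hφ : ∀ i, d (i + ℓ) ∘ₗ φ i =
      (-1 : ℝ) ^ ℓ • lcast C (show i + 1 + ℓ = i + ℓ + 1 by ring) ∘ₗ φ (i + 1) ∘ₗ d i)
    (k : ℤ) [FiniteDimensional ℝ (C k)] [FiniteDimensional ℝ (C (k - ℓ + 1))] :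
    (bphi C d ℓ φ k : ℤ) ≤
      (mnum C k : ℤ) - vnum C ℓ φ (k - ℓ) + mnum C (k - ℓ + 1) - vnum C ℓ φ (k - ℓ + 1) := by
  obtain ⟨i, rfl⟩ : ∃ i, k = i + 1 := ⟨k - 1, by ring⟩
  have finrank_cone : bphi C d ℓ φ (i + 1) + finrank ℝ (range (coneD C d ℓ φ i)) +
      finrank ℝ (range (coneD C d ℓ φ (i + 1))) = mnum C (i + 1) + mnum C (i + 1 - ℓ + 1) :=
    (finrank_Hcoh_add_one (A := fun j ↦ C j × C (j - ℓ + 1)) i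
      (coneD_comp_coneD hd hφ i)).trans finrank_prod
  have rank_in : vnum C ℓ φ (i + 1 - ℓ) ≤ finrank ℝ (range (coneD C d ℓ φ i)) :=
    (congrArg (vnum C ℓ φ) (add_sub_right_comm i 1 ℓ)).trans_le (vnum_le_finrank_range_coneD i)
  have rank_out : vnum C ℓ φ (i + 1 - ℓ + 1) ≤ finrank ℝ (range (coneD C d ℓ φ (i + 1))) :=
    vnum_le_finrank_range_coneD (i + 1)
  lia

/-- the weak cone Morse inequality
`b^φ_k ≤ m_k − v_{k−ℓ} + m_{k−ℓ+1} − v_{k−ℓ+1}` for every integer `k ≥ 0`. -/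
theorem weak_cone_morse_inequality
    (n ℓ : ℤ) (hn : 0 ≤ n) (hℓ : 1 ≤ ℓ)
    (C : ℤ → Type) [∀ i, AddCommGroup (C i)] [∀ i, Module ℝ (C i)]
    [∀ i, FiniteDimensional ℝ (C i)]
    (hC : ∀ i, i < 0 ∨ n < i → Subsingleton (C i))
    (d : ∀ i, C i →ₗ[ℝ] C (i + 1))
    (hd : ∀ i, (d (i + 1)).comp (d i) = 0)
    (φ : ∀ i, C i →ₗ[ℝ] C (i + ℓ))
    (hφ : ∀ i, (d (i + ℓ)).comp (φ i) =
      ((-1 : ℝ) ^ ℓ) • (lcast C (show i + 1 + ℓ = i + ℓ + 1 by ring)).comp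
        ((φ (i + 1)).comp (d i))) :
    ∀ k : ℤ, 0 ≤ k →
      (bphi C d ℓ φ k : ℤ) ≤
        (mnum C k : ℤ) - vnum C ℓ φ (k - ℓ) + mnum C (k - ℓ + 1) - vnum C ℓ φ (k - ℓ + 1) := by
  exact fun k _ ↦ weak_cone_morse_inequality_general hd hφ k
end
end

section
/- Suppose ℓ = 2 (the algebraic model of c(ψ) for a d-closed two-form ψ). Then for every integer k ≥ 0: 0 ≤ v_k − r_k ≤ m_{k+1} − b_{k+1}. -/
open LinearMap Module

noncomputable section

open ConeMorse

/-!
Restricting `φ` to the cocycles `Z^k` lowers its rank by at most `dim C^k / Z^k = rank d^k`, and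
passing from `φ(Z^k)` to its quotient by coboundaries lowers the dimension by at most
`dim B^{k+ℓ} = rank d^{k+ℓ-1}`. Hence `v_k - r_k ≤ rank d^k + rank d^{k+ℓ-1}`. When `ℓ = 2` these
are the ranks of the differentials into and out of `C^{k+1}`, and the sum of those two ranks is
`m_{k+1} - b_{k+1}`.
-/

namespace ConeMorse

section LinearAlgebra

variable {K V W : Type*} [DivisionRing K] [AddCommGroup V] [Module K V]
  [AddCommGroup W] [Module K W]

theorem finrank_range_le_finrank_map_add_finrank_quotient [FiniteDimensional K V]
    (f : V →ₗ[K] W) (p : Submodule K V) :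
    finrank K (range f) ≤ finrank K (p.map f) + finrank K (V ⧸ p) := by
  obtain ⟨q, hpq⟩ := p.exists_isCompl
  calc finrank K (range f)
      = finrank K (p.map f ⊔ q.map f : Submodule K W) := by
        rw [← Submodule.map_sup, hpq.sup_eq_top, Submodule.map_top]
    _ ≤ finrank K (p.map f) + finrank K (q.map f) :=
        Submodule.finrank_add_le_finrank_add_finrank _ _
    _ ≤ finrank K (p.map f) + finrank K q := by
        gcongr
        exact Submodule.finrank_map_le f q
    _ = finrank K (p.map f) + finrank K (V ⧸ p) := by
        rw [(Submodule.quotientEquivOfIsCompl p q hpq).finrank_eq]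

theorem finrank_le_finrank_quotient_comap_subtype_add_finrank (p q : Submodule K V)
    [FiniteDimensional K p] [FiniteDimensional K q] :
    finrank K p ≤ finrank K (p ⧸ q.comap p.subtype) + finrank K q := by
  rw [← (q.comap p.subtype).finrank_quotient_add_finrank,
    ← Submodule.finrank_map_subtype_eq p (q.comap p.subtype)]
  gcongr
  exact Submodule.finrank_mono (Submodule.map_comap_le _ _)

theorem finrank_quotient_comap_subtype_add_finrank {p q : Submodule K V}
    [FiniteDimensional K p] (hqp : q ≤ p) :
    finrank K (p ⧸ q.comap p.subtype) + finrank K q = finrank K p := by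
  rw [← (Submodule.comapSubtypeEquivOfLe hqp).finrank_eq, Submodule.finrank_quotient_add_finrank]

end LinearAlgebra

section Complex

variable (A : ℤ → Type) [∀ i, AddCommGroup (A i)] [∀ i, Module ℝ (A i)]
  (d : ∀ i, A i →ₗ[ℝ] A (i + 1))

theorem cobound_eq_range_lcast_comp {i j : ℤ} (h : j + 1 = i) :
    cobound A d i = range (lcast A h ∘ₗ d j) := by
  obtain rfl : j = i - 1 := by lia
  rfl

theorem cobound_succ (k : ℤ) : cobound A d (k + 1) = range (d k) :=
  cobound_eq_range_lcast_comp A d rfl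

theorem finrank_cobound {i j : ℤ} (h : j + 1 = i) :
    finrank ℝ (cobound A d i) = finrank ℝ (range (d j)) := by
  subst h
  rw [cobound_succ]

variable [∀ i, FiniteDimensional ℝ (A i)]

theorem bnum_succ_add_finrank_range_add_finrank_range {k : ℤ} (hd : d (k + 1) ∘ₗ d k = 0) :
    bnum A d (k + 1) + finrank ℝ (range (d k)) + finrank ℝ (range (d (k + 1))) =
      mnum A (k + 1) := by
  have cobound_le_cocycles : cobound A d (k + 1) ≤ cocycles A d (k + 1) := by
    rw [cobound_succ]
    exact range_le_ker_iff.mpr hd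
  calc bnum A d (k + 1) + finrank ℝ (range (d k)) + finrank ℝ (range (d (k + 1)))
      = finrank ℝ (cocycles A d (k + 1)) + finrank ℝ (range (d (k + 1))) := by
        rw [← cobound_succ, bnum, finrank_quotient_comap_subtype_add_finrank cobound_le_cocycles]
    _ = mnum A (k + 1) := by
        rw [add_comm]
        exact finrank_range_add_finrank_ker (d (k + 1))

variable (ℓ : ℤ) (φ : ∀ i, A i →ₗ[ℝ] A (i + ℓ)) (k : ℤ)

theorem rnum_le_vnum : rnum A d ℓ φ k ≤ vnum A ℓ φ k :=
  (Submodule.finrank_quotient_le _).trans (Submodule.finrank_mono map_le_range)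

theorem vnum_le_rnum_add_finrank_range_add_finrank_cobound :
    vnum A ℓ φ k ≤
      rnum A d ℓ φ k + finrank ℝ (range (d k)) + finrank ℝ (cobound A d (k + ℓ)) := by
  have finrank_quotient_cocycles :
      finrank ℝ (A k ⧸ cocycles A d k) = finrank ℝ (range (d k)) :=
    (d k).quotKerEquivRange.finrank_eq
  have restrict_to_cocycles :=
    finrank_range_le_finrank_map_add_finrank_quotient (φ k) (cocycles A d k)
  have reduce_mod_cobound := finrank_le_finrank_quotient_comap_subtype_add_finrank
    ((cocycles A d k).map (φ k)) (cobound A d (k + ℓ))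
  unfold vnum rnum
  lia

end Complex

end ConeMorse

theorem rank_deviation_bound_two_form_general
    (C : ℤ → Type) [∀ i, AddCommGroup (C i)] [∀ i, Module ℝ (C i)]
    [∀ i, FiniteDimensional ℝ (C i)]
    (d : ∀ i, C i →ₗ[ℝ] C (i + 1)) (φ : ∀ i, C i →ₗ[ℝ] C (i + 2))
    {k : ℤ} (hd : d (k + 1) ∘ₗ d k = 0) :
    0 ≤ (vnum C 2 φ k : ℤ) - rnum C d 2 φ k ∧
      (vnum C 2 φ k : ℤ) - rnum C d 2 φ k ≤ (mnum C (k + 1) : ℤ) - bnum C d (k + 1) := by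
  have lower := rnum_le_vnum C d 2 φ k
  have upper := vnum_le_rnum_add_finrank_range_add_finrank_cobound C d 2 φ k
  rw [finrank_cobound C d (show k + 1 + 1 = k + 2 by ring)] at upper
  have ranks_at_succ := bnum_succ_add_finrank_range_add_finrank_range C d hd
  lia

/-- STATEMENT 14: if `ℓ = 2`, then for every integer `k ≥ 0`,
`0 ≤ v_k − r_k ≤ m_{k+1} − b_{k+1}`. -/
theorem rank_deviation_bound_two_form
    (n ℓ : ℤ) (hn : 0 ≤ n) (hℓ : 1 ≤ ℓ)
    (C : ℤ → Type) [∀ i, AddCommGroup (C i)] [∀ i, Module ℝ (C i)]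
    [∀ i, FiniteDimensional ℝ (C i)]
    (hC : ∀ i, i < 0 ∨ n < i → Subsingleton (C i))
    (d : ∀ i, C i →ₗ[ℝ] C (i + 1))
    (hd : ∀ i, (d (i + 1)).comp (d i) = 0)
    (φ : ∀ i, C i →ₗ[ℝ] C (i + ℓ))
    (hφ : ∀ i, (d (i + ℓ)).comp (φ i) =
      ((-1 : ℝ) ^ ℓ) • (lcast C (show i + 1 + ℓ = i + ℓ + 1 by ring)).comp
        ((φ (i + 1)).comp (d i)))
    (hl2 : ℓ = 2) :
    ∀ k : ℤ, 0 ≤ k →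
      0 ≤ (vnum C ℓ φ k : ℤ) - rnum C d ℓ φ k ∧
        (vnum C ℓ φ k : ℤ) - rnum C d ℓ φ k ≤ (mnum C (k + 1) : ℤ) - bnum C d (k + 1) := by
  subst hl2
  exact fun k _ ↦ rank_deviation_bound_two_form_general C d φ (hd k)
end
end
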